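/- Let λ > 0 and β ∈ (0,1]. For every n ∈ ℕ₀ and every x ∈ ℝ, the Appell polynomials generated by the fractional Poisson measure satisfy A_n^{λ,β}(x) = ∑_{k=0}^n binom(n,k) [∑_{i=0}^{n−k} (−1)^i i! B_{n−k,i}(M_{λ,β}(1), …, M_{λ,β}(n−k−i+1))] x^k, where B_{n,k} are the Bell polynomials and M_{λ,β}(j) is the j-th moment of the fractional Poisson measure. -/

import Mathlib

/-!
Since the moment generating function of `π_{λ,β}` is `M(z) = E_β(λ(eᶻ - 1))`, the Appell
polynomials are the derivatives at `0` of `e^{zx} · M(z)⁻¹`. By the Leibniz rule it remains to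
differentiate `M⁻¹`: writing the Taylor series of `M` as `1 + B`, with `B` built from the moments,
the geometric series gives `M⁻¹ = ∑ᵢ (-1)ⁱ Bⁱ`, and the multinomial theorem turns the coefficients
of `Bⁱ` into Bell polynomials.

The analytic input is that the weights of `π_{λ,β}` are nonnegative, that is, `E_β⁽ᵏ⁾(-λ) ≥ 0`;
otherwise `ENNReal.ofReal` would truncate them. This is obtained by discretization. Let
`p_{N,j} ≥ 0` be the probability that a renewal process with Sibuya waiting times, whose generating
function is `S = 1 - (1 - X)^β`, has exactly `j` renewals up to time `N`. Expanding
`(1 - X)^{-(βm + 1)} = (1 - X)^{β - 1} (1 - S)^{-(m + 1)}` in powers of `S` shows that its `N`-th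
coefficient is `∑ⱼ (m + j choose m) p_{N,j}`. Summing over `m` against `(m choose k) (-c)^{m - k}`
yields a nonnegative combination of the powers `(1 + c)^{-(j + k + 1)}`. For `c = λ / N^β` and
`N → ∞`, Euler's limit formula for `Γ` turns this sum, rescaled by `N^{-βk}`, into
`E_β⁽ᵏ⁾(-λ) / k!`.
-/

open MeasureTheory Finset
open scoped ENNReal NNReal

noncomputable section

/-- The complex Mittag-Leffler function `E_β(z) = ∑ zⁿ / Γ(βn+1)`. -/
def mittagLeffler (β : ℝ) (z : ℂ) : ℂ :=
  ∑' n : ℕ, z ^ n / (Complex.Gamma ((β * n + 1 : ℝ) : ℂ))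

/-- The real Mittag-Leffler function `E_β(x) = ∑ xⁿ / Γ(βn+1)`. -/
def mittagLefflerR (β : ℝ) (x : ℝ) : ℝ :=
  ∑' n : ℕ, x ^ n / Real.Gamma (β * n + 1)

/-- The fractional Poisson measure `π_{λ,β} = ∑_k (λᵏ/k!) E_β⁽ᵏ⁾(-λ) δ_k` on `ℝ`. -/
def fracPoisson (lam β : ℝ) : Measure ℝ :=
  Measure.sum fun k : ℕ =>
    ENNReal.ofReal (lam ^ k / k.factorial * iteratedDeriv k (mittagLefflerR β) (-lam)) •
      Measure.dirac (k : ℝ)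

/-- The Poisson measure with rate `μ` on `ℝ`, `π_μ({k}) = (μᵏ/k!) e^{-μ}`. -/
def poissonMeasureR (μ : ℝ) : Measure ℝ :=
  Measure.sum fun k : ℕ =>
    ENNReal.ofReal (μ ^ k / k.factorial * Real.exp (-μ)) • Measure.dirac (k : ℝ)

/-- The generalized Appell polynomials
`C_n^{λ,β}(x) = dⁿ/dzⁿ [e^{x log(1+z)} / E_β(λz)]` at `z = 0`. -/
def genAppell (lam β : ℝ) (n : ℕ) (x : ℂ) : ℂ :=
  iteratedDeriv n
    (fun z : ℂ => Complex.exp (x * Complex.log (1 + z)) / mittagLeffler β (lam * z)) 0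

/-- The Appell polynomials `A_n^{λ,β}(x) = dⁿ/dzⁿ [e^{zx} / E_β(λ(eᶻ-1))]` at `z = 0`. -/
def appell (lam β : ℝ) (n : ℕ) (x : ℂ) : ℂ :=
  iteratedDeriv n
    (fun z : ℂ => Complex.exp (z * x) / mittagLeffler β (lam * (Complex.exp z - 1))) 0

/-- Stirling numbers of the first kind, via `(log(1+z))^k = k! ∑_{n≥k} s(n,k) zⁿ/n!`. -/
def stirlingFst (n k : ℕ) : ℝ :=
  iteratedDeriv n (fun x : ℝ => (Real.log (1 + x)) ^ k) 0 / k.factorial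

/-- Stirling numbers of the second kind, via `(eᶻ-1)^k = k! ∑_{n≥k} S(n,k) zⁿ/n!`. -/
def stirlingSnd (n k : ℕ) : ℝ :=
  iteratedDeriv n (fun x : ℝ => (Real.exp x - 1) ^ k) 0 / k.factorial

/-- The `n`-th moment of the fractional Poisson measure. -/
def fpMoment (lam β : ℝ) (n : ℕ) : ℝ := ∫ x, x ^ n ∂(fracPoisson lam β)

/-- `M̃_{λ,β}(m) = m! λᵐ / Γ(mβ+1)`. -/
def tildeM (lam β : ℝ) (m : ℕ) : ℝ := m.factorial * lam ^ m / Real.Gamma (m * β + 1)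

/-- The (partial exponential) Bell polynomials `B_{n,k}(x₁, …, x_{n-k+1})`. -/
def bellPoly (n k : ℕ) (x : ℕ → ℂ) : ℂ :=
  ∑ j ∈ (Fintype.piFinset fun _ : Fin (n - k + 1) => Finset.range (n + 1)).filter
      (fun j => (∑ i, j i) = k ∧ (∑ i, (i.1 + 1) * j i) = n),
    (n.factorial : ℂ) / (∏ i, ((j i).factorial : ℂ)) *
      ∏ i, (x (i.1 + 1) / ((i.1 + 1).factorial : ℂ)) ^ j i

section Multichoose

open Filter Topology

lemma sum_range_multichoose {A : Type*} [Ring A] [BinomialRing A] (a : A) (N : ℕ) :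
    ∑ j ∈ range (N + 1), Ring.multichoose a j = Ring.multichoose (a + 1) N := by
  induction N with
  | zero => simp
  | succ N ih => rw [sum_range_succ, ih, Ring.multichoose_succ_succ, add_comm]

lemma factorial_mul_multichoose (a : ℝ) (N : ℕ) :
    (N.factorial : ℝ) * Ring.multichoose a N = ∏ j ∈ range N, (a + j) := by
  rw [← nsmul_eq_mul, Ring.factorial_nsmul_multichoose_eq_ascPochhammer,
    Polynomial.ascPochhammer_smeval_eq_eval]
  induction N with
  | zero => simp
  | succ N ih => rw [ascPochhammer_succ_eval, ih, prod_range_succ]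

lemma multichoose_nonneg {a : ℝ} (ha : 0 ≤ a) (N : ℕ) : 0 ≤ Ring.multichoose a N := by
  have hfact : (0 : ℝ) < N.factorial := by positivity
  rw [← mul_nonneg_iff_of_pos_left hfact, factorial_mul_multichoose]
  exact prod_nonneg fun j _ => by positivity

lemma multichoose_neg_succ_nonpos {β : ℝ} (hβ0 : 0 ≤ β) (hβ1 : β ≤ 1) (N : ℕ) :
    Ring.multichoose (-β) (N + 1) ≤ 0 := by
  have hfact : (0 : ℝ) < (N + 1).factorial := by positivity
  refine nonpos_of_mul_nonpos_right ?_ hfact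
  rw [factorial_mul_multichoose, prod_range_succ']
  refine mul_nonpos_of_nonneg_of_nonpos (prod_nonneg fun j _ => ?_) (by simpa using hβ0)
  push_cast
  linarith [(Nat.cast_nonneg j : (0 : ℝ) ≤ j)]

lemma hasSum_multichoose_mul_pow (a : ℝ) {q : ℝ} (hq : |q| < 1) :
    HasSum (fun j : ℕ => Ring.multichoose a j * q ^ j) ((1 - q) ^ (-a)) := by
  have hq' : q ∈ Metric.eball (0 : ℝ) 1 := by
    simpa [← ofReal_norm] using hq
  have h := (Real.one_div_one_sub_rpow_hasFPowerSeriesOnBall_zero a).hasSum hq'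
  have hq1 : 0 ≤ 1 - q := by linarith [le_abs_self q]
  simpa [FormalMultilinearSeries.ofScalars_apply_eq, ← Ring.multichoose_eq, mul_comm,
    Real.rpow_neg hq1] using h

-- Rankin's trick: the partial sum of the binomial series at `q = N / (N + R)` is at most its sum.
lemma multichoose_add_one_le {a R : ℝ} (ha : 0 ≤ a) (hR : 0 < R) (N : ℕ) :
    Ring.multichoose (a + 1) N ≤ Real.exp R * ((N + R) / R) ^ a := by
  set q : ℝ := N / (N + R) with hq
  have hNR : 0 < N + R := by positivity
  have hq0 : 0 ≤ q := by positivity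
  have hq1 : q < 1 := (div_lt_one hNR).2 (by linarith)
  have hsum := hasSum_multichoose_mul_pow a (abs_lt.2 ⟨by linarith, hq1⟩)
  have hpow : Real.exp (-R) ≤ q ^ N := by
    rcases N.eq_zero_or_pos with rfl | hN
    · simpa using hR.le
    have hN' : (0 : ℝ) < N := by exact_mod_cast hN
    calc Real.exp (-R) = Real.exp (-(R / N)) ^ N := by
          rw [← Real.exp_nat_mul]; congr 1; field_simp
      _ ≤ q ^ N := by
          gcongr
          rw [Real.exp_neg, inv_le_comm₀ (Real.exp_pos _) (by positivity), hq, inv_div, add_div,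
            div_self hN'.ne', add_comm]
          exact Real.add_one_le_exp _
  have hpartial : q ^ N * Ring.multichoose (a + 1) N ≤ ((N + R) / R) ^ a := calc
    q ^ N * Ring.multichoose (a + 1) N
        ≤ ∑ j ∈ range (N + 1), Ring.multichoose a j * q ^ j := by
          rw [← sum_range_multichoose, mul_sum]
          refine sum_le_sum fun j hj => ?_
          rw [mul_comm]
          exact mul_le_mul_of_nonneg_left
            (pow_le_pow_of_le_one hq0 hq1.le (mem_range_succ_iff.1 hj)) (multichoose_nonneg ha j)
    _ ≤ (1 - q) ^ (-a) := sum_le_hasSum _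
          (fun j _ => mul_nonneg (multichoose_nonneg ha j) (pow_nonneg hq0 j)) hsum
    _ = ((N + R) / R) ^ a := by
          rw [Real.rpow_neg (by linarith), ← Real.inv_rpow (by linarith)]
          congr 1
          rw [hq, one_sub_div hNR.ne', add_sub_cancel_left, inv_div]
  calc Ring.multichoose (a + 1) N
      = Real.exp R * (Real.exp (-R) * Ring.multichoose (a + 1) N) := by
        rw [← mul_assoc, ← Real.exp_add, add_neg_cancel, Real.exp_zero, one_mul]
    _ ≤ Real.exp R * (q ^ N * Ring.multichoose (a + 1) N) := by
        gcongr
        exact multichoose_nonneg (by linarith) N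
    _ ≤ Real.exp R * ((N + R) / R) ^ a := by gcongr

lemma exists_eventually_multichoose_add_one_le {δ : ℝ} (hδ : 0 < δ) :
    ∃ C : ℝ, ∀ᶠ N : ℕ in atTop, ∀ a : ℝ, 0 ≤ a →
      Ring.multichoose (a + 1) N ≤ C * (δ * N) ^ a := by
  refine ⟨Real.exp (2 / δ), ?_⟩
  filter_upwards [tendsto_natCast_atTop_atTop.eventually_ge_atTop (2 / δ)] with N hN a ha
  have hR : (N + 2 / δ) / (2 / δ) ≤ δ * N := by
    rw [div_le_iff₀ (by positivity)]
    field_simp at hN ⊢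
    linarith
  calc Ring.multichoose (a + 1) N
      ≤ Real.exp (2 / δ) * ((N + 2 / δ) / (2 / δ)) ^ a :=
        multichoose_add_one_le ha (by positivity) N
    _ ≤ Real.exp (2 / δ) * (δ * N) ^ a := by gcongr

lemma tendsto_multichoose_div_rpow {s : ℝ} (hs : 0 < s) :
    Tendsto (fun N : ℕ => Ring.multichoose s N / (N : ℝ) ^ (s - 1)) atTop
      (𝓝 (Real.Gamma s)⁻¹) := by
  have hshift : Tendsto (fun N : ℕ => (N : ℝ) / (N + s)) atTop (𝓝 1) :=
    tendsto_natCast_div_add_atTop s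
  have hGamma := hshift.div (Real.GammaSeq_tendsto_Gamma s) (Real.Gamma_pos_of_pos hs).ne'
  rw [one_div] at hGamma
  refine hGamma.congr' ?_
  filter_upwards [eventually_gt_atTop 0] with N hN
  have hN' : (0 : ℝ) < N := by exact_mod_cast hN
  have hprod : (0 : ℝ) < ∏ j ∈ range N, (s + j) := prod_pos fun j _ => by positivity
  have hmulti : Ring.multichoose s N = (∏ j ∈ range N, (s + j)) / N.factorial := by
    rw [← factorial_mul_multichoose, mul_div_cancel_left₀ _ (by positivity)]
  have hrpow : (N : ℝ) ^ s = (N : ℝ) ^ (s - 1) * N := by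
    rw [← Real.rpow_add_one hN'.ne', sub_add_cancel]
  rw [Pi.div_apply, Real.GammaSeq, prod_range_succ, hmulti, hrpow]
  field_simp [hprod.ne']
  ring

lemma exists_inv_Gamma_add_one_le {δ : ℝ} (hδ : 0 < δ) :
    ∃ C : ℝ, ∀ a : ℝ, 0 ≤ a → (Real.Gamma (a + 1))⁻¹ ≤ C * δ ^ a := by
  obtain ⟨C, hC⟩ := exists_eventually_multichoose_add_one_le hδ
  refine ⟨C, fun a ha => le_of_tendsto (tendsto_multichoose_div_rpow (by linarith)) ?_⟩
  filter_upwards [hC, eventually_gt_atTop 0] with N hCN hN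
  have hN' : (0 : ℝ) < N := by exact_mod_cast hN
  rw [add_sub_cancel_right, div_le_iff₀ (by positivity), mul_assoc,
    ← Real.mul_rpow hδ.le hN'.le]
  exact hCN a ha

end Multichoose

section PowerSeriesCoefficients

open PowerSeries

variable {A : Type*}

lemma coeff_mul_subst [CommRing A] {S : A⟦X⟧} (hS : constantCoeff S = 0) (T B : A⟦X⟧) (N : ℕ) :
    coeff N (T * B.subst S) = ∑ j ∈ range (N + 1), coeff j B * coeff N (T * S ^ j) := by
  have hsub : HasSubst S := HasSubst.of_constantCoeff_zero' hS
  obtain ⟨Q, hQ⟩ : ∃ Q : A⟦X⟧, B = X ^ (N + 1) * Q + ((trunc (N + 1) B : Polynomial A) : A⟦X⟧) :=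
    ⟨_, eq_X_pow_mul_shift_add_trunc (N + 1) B⟩
  have hhigh : coeff N (T * (S ^ (N + 1) * Q.subst S)) = 0 := by
    have hdvd : X ^ (N + 1) ∣ T * (S ^ (N + 1) * Q.subst S) :=
      ((pow_dvd_pow_of_dvd (X_dvd_iff.2 hS) _).mul_right _).mul_left _
    exact X_pow_dvd_iff.1 hdvd N N.lt_succ_self
  have hlow : (trunc (N + 1) B : A⟦X⟧).subst S = ∑ j ∈ range (N + 1), coeff j B • S ^ j := by
    rw [subst_coe hsub, Polynomial.aeval_def, eval₂_trunc_eq_sum_range]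
    simp only [Algebra.smul_def]
  have hB : B.subst S = S ^ (N + 1) * Q.subst S + ∑ j ∈ range (N + 1), coeff j B • S ^ j := by
    conv_lhs => rw [hQ]
    rw [subst_add hsub, subst_mul hsub, subst_pow hsub, subst_X hsub, hlow]
  rw [hB, mul_add, map_add, hhigh, zero_add, mul_sum, map_sum]
  exact sum_congr rfl fun j _ => by rw [mul_smul_comm, coeff_smul, smul_eq_mul]

lemma coeff_mul_pow_succ_of_one_sub_mul_eq_one [CommRing A] {S F : A⟦X⟧}
    (hS : constantCoeff S = 0) (hF : (1 - S) * F = 1) (T : A⟦X⟧) (m N : ℕ) :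
    coeff N (T * F ^ (m + 1)) =
      ∑ j ∈ range (N + 1), ((m + j).choose m : A) * coeff N (T * S ^ j) := by
  have hsub : HasSubst S := HasSubst.of_constantCoeff_zero' hS
  have hgeom : (mk 1 : A⟦X⟧).subst S * (1 - S) = 1 := by
    have h := congrArg (substAlgHom (R := A) hsub) (mk_one_mul_one_sub_eq_one A)
    simp only [map_mul, map_sub, map_one] at h
    rwa [coe_substAlgHom, subst_X hsub] at h
  have hFsub : F = (mk 1 : A⟦X⟧).subst S := (left_inv_eq_right_inv hgeom hF).symm
  rw [hFsub, ← subst_pow hsub, mk_one_pow_eq_mk_choose_add, coeff_mul_subst hS]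
  simp only [coeff_mk]

variable [CommSemiring A] [PartialOrder A] [IsOrderedRing A] {F G : A⟦X⟧}

lemma coeff_mul_nonneg (hF : ∀ n, 0 ≤ coeff n F) (hG : ∀ n, 0 ≤ coeff n G) (n : ℕ) :
    0 ≤ coeff n (F * G) := by
  rw [coeff_mul]
  exact sum_nonneg fun p _ => mul_nonneg (hF p.1) (hG p.2)

lemma coeff_pow_nonneg (hF : ∀ n, 0 ≤ coeff n F) (j n : ℕ) : 0 ≤ coeff n (F ^ j) := by
  induction j generalizing n with
  | zero =>
    rw [pow_zero, coeff_one]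
    split_ifs
    exacts [zero_le_one, le_rfl]
  | succ j ih => exact pow_succ F j ▸ coeff_mul_nonneg ih hF n

end PowerSeriesCoefficients

section NegBinomialSeries

open PowerSeries

/-- The power series of `(1 - X) ^ (-a)`. -/
def negBinomialSeries (a : ℝ) : ℝ⟦X⟧ := mk fun n => Ring.multichoose a n

lemma negBinomialSeries_zero : negBinomialSeries 0 = 1 := by
  ext n
  rcases n with _ | n <;> simp [negBinomialSeries, coeff_one]

lemma negBinomialSeries_add (a b : ℝ) :
    negBinomialSeries (a + b) = negBinomialSeries a * negBinomialSeries b := by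
  have hchoose (r : ℝ) (n : ℕ) : Ring.multichoose r n = (-1) ^ n * Ring.choose (-r) n := by
    rw [Ring.choose_neg, Int.negOnePow_def, Units.smul_def, zsmul_eq_mul, ← mul_assoc]
    simp [← mul_pow, Ring.multichoose_eq]
  ext n
  rw [coeff_mul]
  simp only [negBinomialSeries, coeff_mk, hchoose]
  rw [neg_add, Ring.add_choose_eq n (Commute.all (-a) (-b)), mul_sum]
  refine sum_congr rfl fun p hp => ?_
  rw [← mem_antidiagonal.1 hp, pow_add]
  ring

lemma negBinomialSeries_natCast_mul (a : ℝ) (m : ℕ) :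
    negBinomialSeries (m * a) = negBinomialSeries a ^ m := by
  induction m with
  | zero => simp [negBinomialSeries_zero]
  | succ m ih => rw [Nat.cast_succ, add_one_mul, negBinomialSeries_add, ih, pow_succ]

end NegBinomialSeries

section Sibuya

open PowerSeries

/-- The power series of `1 - (1 - X) ^ β`; for `0 < β ≤ 1` it is the probability generating function
of the Sibuya distribution. -/
def sibuyaSeries (β : ℝ) : ℝ⟦X⟧ := 1 - negBinomialSeries (-β)

/-- The `N`-th coefficient of `(1 - X) ^ (β - 1) * (1 - (1 - X) ^ β) ^ j`: the probability that a
renewal process with Sibuya waiting times has had exactly `j` renewals by time `N`. -/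
def sibuyaRenewalProb (β : ℝ) (N j : ℕ) : ℝ :=
  coeff N (negBinomialSeries (1 - β) * sibuyaSeries β ^ j)

variable {β : ℝ}

lemma constantCoeff_sibuyaSeries (β : ℝ) : constantCoeff (sibuyaSeries β) = 0 := by
  rw [sibuyaSeries, negBinomialSeries, map_sub, constantCoeff_mk, constantCoeff_one,
    Ring.multichoose_zero_right, sub_self]

lemma coeff_sibuyaSeries_nonneg (hβ0 : 0 ≤ β) (hβ1 : β ≤ 1) (n : ℕ) :
    0 ≤ coeff n (sibuyaSeries β) := by
  rcases n with _ | n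
  · rw [coeff_zero_eq_constantCoeff_apply, constantCoeff_sibuyaSeries]
  · simpa [sibuyaSeries, negBinomialSeries, coeff_one] using multichoose_neg_succ_nonpos hβ0 hβ1 n

lemma sibuyaRenewalProb_nonneg (hβ0 : 0 ≤ β) (hβ1 : β ≤ 1) (N j : ℕ) :
    0 ≤ sibuyaRenewalProb β N j := by
  refine coeff_mul_nonneg (fun n => ?_)
    (coeff_pow_nonneg (coeff_sibuyaSeries_nonneg hβ0 hβ1) j) N
  rw [negBinomialSeries, coeff_mk]
  exact multichoose_nonneg (sub_nonneg.2 hβ1) n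

lemma multichoose_eq_sum_sibuyaRenewalProb (β : ℝ) (m N : ℕ) :
    Ring.multichoose (β * m + 1) N =
      ∑ j ∈ range (N + 1), ((m + j).choose m : ℝ) * sibuyaRenewalProb β N j := by
  have hinv : (1 - sibuyaSeries β) * negBinomialSeries β = 1 := by
    rw [sibuyaSeries, sub_sub_cancel, ← negBinomialSeries_add, neg_add_cancel,
      negBinomialSeries_zero]
  have hsplit : negBinomialSeries (β * m + 1) =
      negBinomialSeries (1 - β) * negBinomialSeries β ^ (m + 1) := by
    rw [← negBinomialSeries_natCast_mul, ← negBinomialSeries_add]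
    congr 1
    push_cast
    ring
  calc Ring.multichoose (β * m + 1) N = coeff N (negBinomialSeries (β * m + 1)) := by
        rw [negBinomialSeries, coeff_mk]
    _ = ∑ j ∈ range (N + 1), ((m + j).choose m : ℝ) * sibuyaRenewalProb β N j := by
        rw [hsplit, coeff_mul_pow_succ_of_one_sub_mul_eq_one (constantCoeff_sibuyaSeries β) hinv]
        simp only [sibuyaRenewalProb]

end Sibuya

section CompleteMonotonicity

open Filter Topology

variable {β c lam : ℝ}

lemma choose_mul_choose_add_swap (m k j : ℕ) :
    (m + k).choose k * (m + k + j).choose (m + k) =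
      (j + k).choose k * (m + (j + k)).choose (j + k) := by
  have hleft := Nat.choose_mul (n := m + k + j) (k := m + k) (s := k) (by omega)
  have hright := Nat.choose_mul (n := m + k + j) (k := j + k) (s := k) (by omega)
  have hsymm : (m + j).choose m = (m + j).choose j := Nat.choose_symm_add
  rw [show m + k + j - k = m + j by omega, Nat.add_sub_cancel] at hleft hright
  rw [mul_comm, hleft, hsymm, ← hright, mul_comm, show m + k + j = m + (j + k) by omega]

lemma hasSum_choose_mul_multichoose (hc : |c| < 1) (β : ℝ) (k N : ℕ) :
    HasSum (fun m : ℕ => ((m + k).choose k : ℝ) * (-c) ^ m *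
        Ring.multichoose (β * (m + k : ℕ) + 1) N)
      (∑ j ∈ range (N + 1),
        sibuyaRenewalProb β N j * (j + k).choose k * (1 / (1 + c) ^ (j + k + 1))) := by
  have hgeom (j : ℕ) : HasSum (fun m : ℕ => sibuyaRenewalProb β N j * (j + k).choose k *
      ((m + (j + k)).choose (j + k) * (-c) ^ m))
      (sibuyaRenewalProb β N j * (j + k).choose k * (1 / (1 + c) ^ (j + k + 1))) := by
    have h := hasSum_choose_mul_geometric_of_norm_lt_one (j + k) (r := -c) (by simpa using hc)
    rw [sub_neg_eq_add] at h
    exact h.mul_left _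
  refine (hasSum_sum fun j _ => hgeom j).congr_fun fun m => ?_
  rw [multichoose_eq_sum_sibuyaRenewalProb, mul_sum]
  refine sum_congr rfl fun j _ => ?_
  have hswap : ((m + k).choose k : ℝ) * (m + k + j).choose (m + k) =
      (j + k).choose k * (m + (j + k)).choose (j + k) := by
    exact_mod_cast choose_mul_choose_add_swap m k j
  linear_combination (-c) ^ m * sibuyaRenewalProb β N j * hswap

lemma tsum_choose_mul_multichoose_nonneg (hc0 : 0 ≤ c) (hc1 : c < 1) (hβ0 : 0 ≤ β) (hβ1 : β ≤ 1)
    (k N : ℕ) :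
    0 ≤ ∑' m : ℕ, ((m + k).choose k : ℝ) * (-c) ^ m *
      Ring.multichoose (β * (m + k : ℕ) + 1) N := by
  rw [(hasSum_choose_mul_multichoose (abs_lt.2 ⟨by linarith, hc1⟩) β k N).tsum_eq]
  refine sum_nonneg fun j _ => ?_
  have hprob := sibuyaRenewalProb_nonneg hβ0 hβ1 N j
  positivity

lemma exists_summable_bound_choose_mul_multichoose_div_rpow (hlam : 0 ≤ lam) (hβ : 0 < β) (k : ℕ) :
    ∃ bound : ℕ → ℝ, Summable bound ∧ ∀ᶠ N : ℕ in atTop, ∀ m : ℕ,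
      ‖((m + k).choose k : ℝ) * (-lam) ^ m *
        (Ring.multichoose (β * (m + k : ℕ) + 1) N / (N : ℝ) ^ (β * (m + k : ℕ)))‖ ≤ bound m := by
  set ε : ℝ := (lam + 1)⁻¹ with hε
  have hε0 : 0 < ε := by positivity
  have hlamε : ‖lam * ε‖ < 1 := by
    rw [Real.norm_of_nonneg (by positivity), hε, ← div_eq_mul_inv, div_lt_one (by positivity)]
    linarith
  obtain ⟨C, hC⟩ := exists_eventually_multichoose_add_one_le (δ := ε ^ β⁻¹) (by positivity)
  refine ⟨fun m => ((m + k).choose k : ℝ) * lam ^ m * (C * ε ^ (m + k)), ?_, ?_⟩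
  · refine ((summable_choose_mul_geometric_of_norm_lt_one k hlamε).mul_left (C * ε ^ k)).congr
      fun m => ?_
    rw [mul_pow, pow_add]
    ring
  filter_upwards [hC, eventually_gt_atTop 0] with N hCN hN m
  have hN' : (0 : ℝ) < N := by exact_mod_cast hN
  have hmulti : 0 ≤ Ring.multichoose (β * (m + k : ℕ) + 1) N :=
    multichoose_nonneg (by positivity) N
  have hpow : (ε ^ β⁻¹ * N) ^ (β * (m + k : ℕ)) = ε ^ (m + k) * (N : ℝ) ^ (β * (m + k : ℕ)) := by
    rw [Real.mul_rpow (by positivity) hN'.le, ← Real.rpow_mul hε0.le,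
      inv_mul_cancel_left₀ hβ.ne', Real.rpow_natCast]
  have hratio : Ring.multichoose (β * (m + k : ℕ) + 1) N / (N : ℝ) ^ (β * (m + k : ℕ)) ≤
      C * ε ^ (m + k) := by
    rw [div_le_iff₀ (by positivity), mul_assoc, ← hpow]
    exact hCN _ (by positivity)
  rw [norm_mul, norm_mul, norm_pow, norm_neg, Real.norm_of_nonneg hlam, RCLike.norm_natCast,
    Real.norm_of_nonneg (by positivity)]
  gcongr

lemma tendsto_tsum_choose_mul_multichoose_div_rpow (hlam : 0 ≤ lam) (hβ : 0 < β) (k : ℕ) :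
    Tendsto (fun N : ℕ => ∑' m : ℕ, ((m + k).choose k : ℝ) * (-lam) ^ m *
        (Ring.multichoose (β * (m + k : ℕ) + 1) N / (N : ℝ) ^ (β * (m + k : ℕ)))) atTop
      (𝓝 (∑' m : ℕ, ((m + k).choose k : ℝ) * (-lam) ^ m *
        (Real.Gamma (β * (m + k : ℕ) + 1))⁻¹)) := by
  obtain ⟨bound, hsummable, hbound⟩ :=
    exists_summable_bound_choose_mul_multichoose_div_rpow hlam hβ k
  refine tendsto_tsum_of_dominated_convergence hsummable (fun m => ?_) hbound
  have h := tendsto_multichoose_div_rpow (s := β * (m + k : ℕ) + 1) (by positivity)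
  rw [add_sub_cancel_right] at h
  exact h.const_mul _

lemma tsum_choose_mul_pow_mul_inv_Gamma_nonneg (hlam : 0 ≤ lam) (hβ0 : 0 < β) (hβ1 : β ≤ 1)
    (k : ℕ) :
    0 ≤ ∑' m : ℕ, ((m + k).choose k : ℝ) * (-lam) ^ m *
      (Real.Gamma (β * (m + k : ℕ) + 1))⁻¹ := by
  refine ge_of_tendsto (tendsto_tsum_choose_mul_multichoose_div_rpow hlam hβ0 k) ?_
  have hNβ : Tendsto (fun N : ℕ => (N : ℝ) ^ β) atTop atTop :=
    (tendsto_rpow_atTop hβ0).comp tendsto_natCast_atTop_atTop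
  filter_upwards [hNβ.eventually_gt_atTop lam, eventually_gt_atTop 0] with N hlamN hN
  have hN' : (0 : ℝ) < N := by exact_mod_cast hN
  have hscale (m : ℕ) : ((m + k).choose k : ℝ) * (-lam) ^ m *
      (Ring.multichoose (β * (m + k : ℕ) + 1) N / (N : ℝ) ^ (β * (m + k : ℕ))) =
      ((N : ℝ) ^ (β * k))⁻¹ * (((m + k).choose k : ℝ) * (-(lam / (N : ℝ) ^ β)) ^ m *
        Ring.multichoose (β * (m + k : ℕ) + 1) N) := by
    rw [Nat.cast_add, mul_add, Real.rpow_add hN', ← neg_div, div_pow, Real.rpow_mul hN'.le β m,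
      Real.rpow_natCast]
    field_simp
  rw [tsum_congr hscale, tsum_mul_left]
  exact mul_nonneg (by positivity) (tsum_choose_mul_multichoose_nonneg (by positivity)
    ((div_lt_one (by positivity)).2 hlamN) hβ0.le hβ1 k N)

end CompleteMonotonicity

section PowerSeriesDerivatives

open FormalMultilinearSeries

variable {𝕜 : Type*} [NontriviallyNormedField 𝕜] [CompleteSpace 𝕜] {a : ℕ → 𝕜} {f : 𝕜 → 𝕜} {z₀ : 𝕜}
  {r : ℝ≥0∞}

lemma hasFPowerSeriesOnBall_tsum_ofScalars
    (ha : ∀ ρ : ℝ≥0, Summable fun n => ‖a n‖ * (ρ : ℝ) ^ n) :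
    HasFPowerSeriesOnBall (fun x => ∑' n, a n * x ^ n) (ofScalars 𝕜 a) 0 ⊤ := by
  have hradius : (ofScalars 𝕜 a).radius = ⊤ :=
    radius_eq_top_of_summable_norm _ fun ρ => by simpa only [ofScalars_norm] using ha ρ
  have h := (ofScalars 𝕜 a).hasFPowerSeriesOnBall (by simp [hradius])
  rw [hradius] at h
  refine h.congr fun x _ => ?_
  exact ofScalars_sum_eq a x

lemma hasFPowerSeriesOnBall_deriv_ofScalars
    (hf : HasFPowerSeriesOnBall f (ofScalars 𝕜 a) z₀ r) :
    HasFPowerSeriesOnBall (deriv f) (ofScalars 𝕜 fun n => (n + 1 : ℕ) * a (n + 1)) z₀ r := by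
  have h := (ContinuousLinearMap.apply 𝕜 𝕜 (1 : 𝕜)).comp_hasFPowerSeriesOnBall hf.fderiv
  convert! h using 1
  ext n
  simp

lemma hasFPowerSeriesOnBall_iteratedDeriv_ofScalars
    (hf : HasFPowerSeriesOnBall f (ofScalars 𝕜 a) z₀ r) (k : ℕ) :
    HasFPowerSeriesOnBall (iteratedDeriv k f)
      (ofScalars 𝕜 fun n => (n + k).descFactorial k * a (n + k)) z₀ r := by
  induction k with
  | zero => simpa using hf
  | succ k ih =>
    rw [iteratedDeriv_succ]
    convert! hasFPowerSeriesOnBall_deriv_ofScalars ih using 3 with n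
    rw [← add_assoc, add_right_comm, Nat.descFactorial_succ, Nat.add_sub_cancel, Nat.cast_mul,
      mul_assoc]

lemma hasSum_iteratedDeriv_of_hasFPowerSeriesOnBall_top
    (hf : HasFPowerSeriesOnBall f (ofScalars 𝕜 a) 0 ⊤) (k : ℕ) (z : 𝕜) :
    HasSum (fun n => (n + k).descFactorial k * a (n + k) * z ^ n) (iteratedDeriv k f z) := by
  have h := (hasFPowerSeriesOnBall_iteratedDeriv_ofScalars hf k).hasSum (y := z) (by simp)
  simpa [ofScalars_apply_eq, mul_comm] using h

end PowerSeriesDerivatives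

section MittagLeffler

open FormalMultilinearSeries

variable {β : ℝ}

lemma summable_inv_Gamma_mul_pow (hβ : 0 < β) (r : ℝ≥0) :
    Summable fun n : ℕ => (Real.Gamma (β * n + 1))⁻¹ * (r : ℝ) ^ n := by
  set ε : ℝ := ((r : ℝ) + 1)⁻¹ with hε
  have hε0 : 0 < ε := by positivity
  have hrε : r * ε < 1 := by
    rw [hε, ← div_eq_mul_inv, div_lt_one (by positivity)]
    linarith
  obtain ⟨C, hC⟩ := exists_inv_Gamma_add_one_le (δ := ε ^ β⁻¹) (by positivity)
  refine Summable.of_nonneg_of_le (fun n => ?_) (fun n => ?_)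
    ((summable_geometric_of_lt_one (by positivity) hrε).mul_left C)
  · have := Real.Gamma_pos_of_pos (s := β * n + 1) (by positivity)
    positivity
  calc (Real.Gamma (β * n + 1))⁻¹ * (r : ℝ) ^ n
      ≤ C * (ε ^ β⁻¹) ^ (β * n) * (r : ℝ) ^ n := by
        gcongr
        exact hC _ (by positivity)
    _ = C * (r * ε) ^ n := by
        rw [← Real.rpow_mul hε0.le, inv_mul_cancel_left₀ hβ.ne', Real.rpow_natCast, mul_pow]
        ring

lemma hasFPowerSeriesOnBall_mittagLefflerR (hβ : 0 < β) :
    HasFPowerSeriesOnBall (mittagLefflerR β)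
      (ofScalars ℝ fun n : ℕ => (Real.Gamma (β * n + 1))⁻¹) 0 ⊤ := by
  have heq : mittagLefflerR β = fun x => ∑' n : ℕ, (Real.Gamma (β * n + 1))⁻¹ * x ^ n :=
    funext fun x => tsum_congr fun n => div_eq_inv_mul _ _
  rw [heq]
  refine hasFPowerSeriesOnBall_tsum_ofScalars fun r => ?_
  refine (summable_inv_Gamma_mul_pow hβ r).congr fun n => ?_
  rw [Real.norm_of_nonneg (inv_nonneg.2 (Real.Gamma_pos_of_pos (by positivity)).le)]

lemma hasFPowerSeriesOnBall_mittagLeffler (hβ : 0 < β) :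
    HasFPowerSeriesOnBall (mittagLeffler β)
      (ofScalars ℂ fun n : ℕ => (((Real.Gamma (β * n + 1))⁻¹ : ℝ) : ℂ)) 0 ⊤ := by
  have heq : mittagLeffler β =
      fun z => ∑' n : ℕ, (((Real.Gamma (β * n + 1))⁻¹ : ℝ) : ℂ) * z ^ n := by
    funext z
    refine tsum_congr fun n => ?_
    rw [Complex.Gamma_ofReal, div_eq_inv_mul, Complex.ofReal_inv]
  rw [heq]
  refine hasFPowerSeriesOnBall_tsum_ofScalars fun r => ?_
  refine (summable_inv_Gamma_mul_pow hβ r).congr fun n => ?_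
  rw [Complex.norm_real,
    Real.norm_of_nonneg (inv_nonneg.2 (Real.Gamma_pos_of_pos (by positivity)).le)]

lemma differentiable_mittagLeffler (hβ : 0 < β) : Differentiable ℂ (mittagLeffler β) := by
  simpa [← differentiableOn_univ] using (hasFPowerSeriesOnBall_mittagLeffler hβ).differentiableOn

lemma mittagLeffler_zero (β : ℝ) : mittagLeffler β 0 = 1 := by
  rw [mittagLeffler, tsum_eq_single 0 fun n hn => by simp [hn]]
  simp

lemma iteratedDeriv_mittagLeffler_ofReal (hβ : 0 < β) (k : ℕ) (x : ℝ) :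
    iteratedDeriv k (mittagLeffler β) x = ((iteratedDeriv k (mittagLefflerR β) x : ℝ) : ℂ) := by
  refine (hasSum_iteratedDeriv_of_hasFPowerSeriesOnBall_top
    (hasFPowerSeriesOnBall_mittagLeffler hβ) k x).unique ?_
  simpa using Complex.hasSum_ofReal.2 (hasSum_iteratedDeriv_of_hasFPowerSeriesOnBall_top
    (hasFPowerSeriesOnBall_mittagLefflerR hβ) k x)

lemma iteratedDeriv_mittagLefflerR_neg_nonneg {lam : ℝ} (hlam : 0 ≤ lam) (hβ0 : 0 < β)
    (hβ1 : β ≤ 1) (k : ℕ) : 0 ≤ iteratedDeriv k (mittagLefflerR β) (-lam) := by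
  have hsum := hasSum_iteratedDeriv_of_hasFPowerSeriesOnBall_top
    (hasFPowerSeriesOnBall_mittagLefflerR hβ0) k (-lam)
  have hterm (m : ℕ) : ((m + k).descFactorial k : ℝ) * (Real.Gamma (β * (m + k : ℕ) + 1))⁻¹ *
      (-lam) ^ m = k.factorial * (((m + k).choose k : ℝ) * (-lam) ^ m *
        (Real.Gamma (β * (m + k : ℕ) + 1))⁻¹) := by
    rw [Nat.descFactorial_eq_factorial_mul_choose]
    push_cast
    ring
  rw [← hsum.tsum_eq, tsum_congr hterm, tsum_mul_left]
  exact mul_nonneg (by positivity) (tsum_choose_mul_pow_mul_inv_Gamma_nonneg hlam hβ0 hβ1 k)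

end MittagLeffler

section FractionalPoisson

open ProbabilityTheory

variable {lam β : ℝ}

/-- The mass `π_{λ,β}({k}) = (λᵏ/k!) E_β⁽ᵏ⁾(-λ)`, before the truncation by `ENNReal.ofReal`. -/
def fracPoissonWeight (lam β : ℝ) (k : ℕ) : ℝ :=
  lam ^ k / k.factorial * iteratedDeriv k (mittagLefflerR β) (-lam)

lemma fracPoissonWeight_nonneg (hlam : 0 ≤ lam) (hβ0 : 0 < β) (hβ1 : β ≤ 1) (k : ℕ) :
    0 ≤ fracPoissonWeight lam β k :=
  mul_nonneg (by positivity) (iteratedDeriv_mittagLefflerR_neg_nonneg hlam hβ0 hβ1 k)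

-- This is the Taylor expansion of `E_β` at `-λ`, evaluated at `λ(e^z - 1) = -λ + λe^z`.
lemma hasSum_fracPoissonWeight_mul_cexp (hβ : 0 < β) (lam : ℝ) (z : ℂ) :
    HasSum (fun k : ℕ => (fracPoissonWeight lam β k : ℂ) * Complex.exp (z * k))
      (mittagLeffler β (lam * (Complex.exp z - 1))) := by
  have htaylor := Complex.hasSum_taylorSeries_of_entire (differentiable_mittagLeffler hβ)
    ((-lam : ℝ) : ℂ) (lam * (Complex.exp z - 1))
  refine htaylor.congr_fun fun k => ?_
  have hshift : (lam : ℂ) * (Complex.exp z - 1) - ((-lam : ℝ) : ℂ) = lam * Complex.exp z := by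
    push_cast
    ring
  rw [iteratedDeriv_mittagLeffler_ofReal hβ, hshift, mul_pow, mul_comm z, Complex.exp_nat_mul,
    fracPoissonWeight, smul_eq_mul, smul_eq_mul]
  push_cast
  ring

lemma summable_toReal_ofReal_fracPoissonWeight_mul_norm_cexp (hlam : 0 ≤ lam) (hβ0 : 0 < β)
    (hβ1 : β ≤ 1) (z : ℂ) :
    Summable fun k : ℕ =>
      (ENNReal.ofReal (fracPoissonWeight lam β k)).toReal * ‖Complex.exp (z * (k : ℝ))‖ := by
  refine (hasSum_fracPoissonWeight_mul_cexp hβ0 lam z).summable.norm.congr fun k => ?_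
  have hk := fracPoissonWeight_nonneg hlam hβ0 hβ1 k
  rw [ENNReal.toReal_ofReal hk, norm_mul, Complex.norm_real, Real.norm_of_nonneg hk,
    Complex.ofReal_natCast]

lemma complexMGF_fracPoisson (hlam : 0 ≤ lam) (hβ0 : 0 < β) (hβ1 : β ≤ 1) (z : ℂ) :
    complexMGF id (fracPoisson lam β) z = mittagLeffler β (lam * (Complex.exp z - 1)) := by
  have hsum := integral_sum_dirac_eq_tsum (f := fun x : ℝ => Complex.exp (z * x))
    (fun _ => ENNReal.ofReal_ne_top)
    (summable_toReal_ofReal_fracPoissonWeight_mul_norm_cexp hlam hβ0 hβ1 z)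
  refine hsum.trans ?_
  rw [← (hasSum_fracPoissonWeight_mul_cexp hβ0 lam z).tsum_eq]
  refine tsum_congr fun k => ?_
  rw [ENNReal.toReal_ofReal (fracPoissonWeight_nonneg hlam hβ0 hβ1 k), Complex.real_smul,
    Complex.ofReal_natCast]

lemma integrableExpSet_fracPoisson (hlam : 0 ≤ lam) (hβ0 : 0 < β) (hβ1 : β ≤ 1) :
    integrableExpSet id (fracPoisson lam β) = Set.univ := by
  refine Set.eq_univ_of_forall fun t => ?_
  change Integrable (fun x : ℝ => Real.exp (t * x)) (fracPoisson lam β)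
  rw [fracPoisson, integrable_sum_dirac_iff fun _ => ENNReal.ofReal_ne_top]
  refine (summable_toReal_ofReal_fracPoissonWeight_mul_norm_cexp hlam hβ0 hβ1 t).congr fun k => ?_
  rw [fracPoissonWeight, ← Complex.ofReal_mul, ← Complex.ofReal_exp, Complex.norm_real]

lemma fpMoment_eq_iteratedDeriv (hlam : 0 ≤ lam) (hβ0 : 0 < β) (hβ1 : β ≤ 1) (n : ℕ) :
    (fpMoment lam β n : ℂ) =
      iteratedDeriv n (fun z => mittagLeffler β (lam * (Complex.exp z - 1))) 0 := by
  rw [← funext (complexMGF_fracPoisson hlam hβ0 hβ1),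
    iteratedDeriv_complexMGF (by simp [integrableExpSet_fracPoisson hlam hβ0 hβ1]), fpMoment,
    ← integral_complex_ofReal]
  simp

end FractionalPoisson

section Bell

open PowerSeries

lemma coeff_mk_pow_eq_sum_multinomial {A : Type*} [CommSemiring A] (v : ℕ → A) (d i : ℕ) :
    coeff d (mk v ^ i) =
      ∑ j ∈ (piAntidiag (univ : Finset (Fin (d + 1))) i).filter fun j => ∑ l, l.1 * j l = d,
        (Nat.multinomial univ j : A) * ∏ l : Fin (d + 1), v l ^ j l := by
  have htrunc : coeff d (mk v ^ i) = ((trunc (d + 1) (mk v)) ^ i).coeff d := by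
    have h := congrArg (fun p => p.coeff d) (trunc_trunc_pow (mk v) (d + 1) i)
    simp only [coeff_trunc, Nat.lt_succ_self, if_true] at h
    rw [← h, ← Polynomial.coe_pow, Polynomial.coeff_coe]
  have hpoly : trunc (d + 1) (mk v) =
      ∑ l : Fin (d + 1), Polynomial.C (v l) * Polynomial.X ^ (l : ℕ) := by
    rw [Fin.sum_univ_eq_sum_range (fun l => Polynomial.C (v l) * Polynomial.X ^ l)]
    ext m
    simp [coeff_trunc, Polynomial.coeff_X_pow]
  have hterm (j : Fin (d + 1) → ℕ) :
      ((Nat.multinomial univ j : Polynomial A) *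
        ∏ l : Fin (d + 1), (Polynomial.C (v l) * Polynomial.X ^ (l : ℕ)) ^ j l).coeff d =
      if ∑ l, l.1 * j l = d then (Nat.multinomial univ j : A) * ∏ l : Fin (d + 1), v l ^ j l
      else 0 := by
    simp only [mul_pow, prod_mul_distrib, ← pow_mul, prod_pow_eq_pow_sum, ← Polynomial.C_eq_natCast,
      ← Polynomial.C_pow, ← map_prod]
    rw [← mul_assoc, ← Polynomial.C_mul, Polynomial.coeff_C_mul_X_pow]
    simp only [eq_comm]
  rw [htrunc, hpoly, sum_pow_eq_sum_piAntidiag, Polynomial.finsetSum_coeff, sum_filter]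
  exact sum_congr rfl fun j _ => hterm j

/-- The series `∑_{n ≥ 1} (x_n / n!) Xⁿ`, whose powers generate the Bell polynomials. -/
def bellSeries (x : ℕ → ℂ) : ℂ⟦X⟧ := X * PowerSeries.mk fun n => x (n + 1) / (n + 1).factorial

lemma constantCoeff_bellSeries (x : ℕ → ℂ) : constantCoeff (bellSeries x) = 0 := by
  simp [bellSeries]

-- After division by `X ^ i`, the coefficient of degree `n - i` only involves `x₁, …, x_{n-i+1}`.
lemma coeff_bellSeries_pow (x : ℕ → ℂ) {n i : ℕ} (hi : i ≤ n) :
    coeff n (bellSeries x ^ i) = (i.factorial : ℂ) / n.factorial * bellPoly n i x := by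
  rw [bellSeries, mul_pow, coeff_X_pow_mul', if_pos hi, coeff_mk_pow_eq_sum_multinomial, bellPoly,
    mul_sum]
  refine sum_congr ?_ fun j hj => ?_
  · ext j
    have hsum : ∑ l : Fin (n - i + 1), (l.1 + 1) * j l = ∑ l, l.1 * j l + ∑ l, j l := by
      simp only [add_one_mul, sum_add_distrib]
    have hle (l : Fin (n - i + 1)) : j l ≤ ∑ l, j l :=
      single_le_sum_of_canonicallyOrdered (mem_univ l)
    simp only [mem_filter, mem_piAntidiag, Fintype.mem_piFinset, mem_range, hsum, mem_univ,
      implies_true, and_true]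
    constructor
    · rintro ⟨hcard, hdeg⟩
      replace hcard : ∑ l, j l = i := hcard
      exact ⟨fun l => by have := hle l; omega, hcard, by omega⟩
    · rintro ⟨_, hcard, hdeg⟩
      exact ⟨hcard, by omega⟩
  · have hcard : ∑ l, j l = i := (mem_filter.1 hj).2.1
    have hmultinomial : (∏ l, ((j l).factorial : ℂ)) * (Nat.multinomial univ j : ℂ) =
        (i.factorial : ℂ) := by exact_mod_cast hcard ▸ Nat.multinomial_spec univ j
    have hprod : (∏ l, ((j l).factorial : ℂ)) ≠ 0 :=
      prod_ne_zero_iff.2 fun l _ => by exact_mod_cast (j l).factorial_ne_zero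
    have hn : (n.factorial : ℂ) ≠ 0 := by exact_mod_cast n.factorial_ne_zero
    rw [← hmultinomial]
    field_simp

lemma coeff_of_one_add_bellSeries_mul_eq_one {x : ℕ → ℂ} {G : ℂ⟦X⟧}
    (hG : (1 + bellSeries x) * G = 1) (n : ℕ) :
    coeff n G =
      (∑ i ∈ range (n + 1), (-1 : ℂ) ^ i * i.factorial * bellPoly n i x) / n.factorial := by
  have hconst : constantCoeff (-bellSeries x) = 0 := by
    rw [map_neg, constantCoeff_bellSeries, neg_zero]
  have hgeom := coeff_mul_pow_succ_of_one_sub_mul_eq_one hconst (by rwa [sub_neg_eq_add]) 1 0 n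
  simp only [one_mul, zero_add, pow_one, Nat.choose_zero_right, Nat.cast_one] at hgeom
  rw [hgeom, sum_div]
  refine sum_congr rfl fun i hi => ?_
  rw [neg_pow, show (-1 : ℂ⟦X⟧) ^ i = C ((-1 : ℂ) ^ i) by simp, coeff_C_mul,
    coeff_bellSeries_pow x (mem_range_succ_iff.1 hi)]
  ring

end Bell

section Taylor

open PowerSeries
open scoped ContDiff

variable {𝕜 : Type*} [NontriviallyNormedField 𝕜]

/-- The formal Taylor series `∑ f⁽ⁿ⁾(z₀) / n! Xⁿ`. -/
def taylorPowerSeries (f : 𝕜 → 𝕜) (z₀ : 𝕜) : 𝕜⟦X⟧ :=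
  mk fun n => iteratedDeriv n f z₀ / n.factorial

lemma taylorPowerSeries_mul [CharZero 𝕜] {f g : 𝕜 → 𝕜} {z₀ : 𝕜} (hf : ContDiffAt 𝕜 ∞ f z₀)
    (hg : ContDiffAt 𝕜 ∞ g z₀) :
    taylorPowerSeries (f * g) z₀ = taylorPowerSeries f z₀ * taylorPowerSeries g z₀ := by
  ext n
  simp only [coeff_mul, taylorPowerSeries, coeff_mk]
  rw [iteratedDeriv_mul (hf.of_le (by exact_mod_cast le_top)) (hg.of_le (by exact_mod_cast le_top)),
    Nat.sum_antidiagonal_eq_sum_range_succ_mk, sum_div]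
  refine sum_congr rfl fun i hi => ?_
  have hfact (m : ℕ) : (m.factorial : 𝕜) ≠ 0 := by exact_mod_cast m.factorial_ne_zero
  rw [Nat.cast_choose 𝕜 (mem_range_succ_iff.1 hi)]
  field_simp [hfact]

lemma taylorPowerSeries_eq_one_add_bellSeries {f : ℂ → ℂ} {z₀ : ℂ} (hf : f z₀ = 1) :
    taylorPowerSeries f z₀ = 1 + bellSeries fun n => iteratedDeriv n f z₀ := by
  ext n
  rcases n with _ | n
  · simp [taylorPowerSeries, bellSeries, hf]
  · simp [taylorPowerSeries, bellSeries, coeff_succ_X_mul, coeff_one]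

lemma iteratedDeriv_inv_of_eq_one {f : ℂ → ℂ} {z₀ : ℂ} (hf : ContDiffAt ℂ ∞ f z₀)
    (hf1 : f z₀ = 1) (n : ℕ) :
    iteratedDeriv n f⁻¹ z₀ = ∑ i ∈ range (n + 1), (-1 : ℂ) ^ i * i.factorial *
      bellPoly n i fun j => iteratedDeriv j f z₀ := by
  have hf0 : f z₀ ≠ 0 := by simp [hf1]
  have hone : taylorPowerSeries (f * f⁻¹) z₀ = 1 := by
    have hev : f * f⁻¹ =ᶠ[nhds z₀] fun _ => 1 := by
      filter_upwards [hf.continuousAt.eventually_ne hf0] with z hz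
      exact mul_inv_cancel₀ hz
    ext m
    rcases m with _ | m <;>
      simp [taylorPowerSeries, hev.iteratedDeriv_eq, iteratedDeriv_const, coeff_one]
  rw [taylorPowerSeries_mul hf (hf.inv hf0), taylorPowerSeries_eq_one_add_bellSeries hf1] at hone
  have hcoeff := coeff_of_one_add_bellSeries_mul_eq_one hone n
  rw [taylorPowerSeries, coeff_mk] at hcoeff
  exact (div_left_inj' (by exact_mod_cast n.factorial_ne_zero)).1 hcoeff

end Taylor

section Appell

open scoped ContDiff

theorem stmt17_general {lam β : ℝ} (hlam : 0 ≤ lam) (hβ0 : 0 < β) (hβ1 : β ≤ 1) (n : ℕ) (x : ℂ) :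
    appell lam β n x =
      ∑ k ∈ range (n + 1), (n.choose k : ℂ) *
        (∑ i ∈ range (n - k + 1), (-1 : ℂ) ^ i * (i.factorial : ℂ) *
          bellPoly (n - k) i (fun j => ((fpMoment lam β j : ℝ) : ℂ))) * x ^ k := by
  set f : ℂ → ℂ := fun z => mittagLeffler β (lam * (Complex.exp z - 1)) with hf
  have hfsmooth : ContDiffAt ℂ ∞ f 0 :=
    ((differentiable_mittagLeffler hβ0).contDiff.comp (by fun_prop)).contDiffAt
  have hf1 : f 0 = 1 := by simp [hf, mittagLeffler_zero]
  have hgen : (fun z : ℂ => Complex.exp (z * x) / f z) = (fun z => Complex.exp (x * z)) * f⁻¹ :=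
    funext fun z => by simp [div_eq_mul_inv, mul_comm z]
  have hexp : ContDiffAt ℂ ∞ (fun z : ℂ => Complex.exp (x * z)) 0 := by fun_prop
  have hinv : ContDiffAt ℂ ∞ f⁻¹ 0 := hfsmooth.inv (by simp [hf1])
  rw [appell, hgen, iteratedDeriv_mul (hexp.of_le (by exact_mod_cast le_top))
    (hinv.of_le (by exact_mod_cast le_top))]
  refine sum_congr rfl fun k _ => ?_
  rw [iteratedDeriv_inv_of_eq_one hfsmooth hf1, iteratedDeriv_cexp_const_mul]
  simp only [fpMoment_eq_iteratedDeriv hlam hβ0 hβ1, mul_zero, Complex.exp_zero, mul_one]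
  ring

end Appell

theorem stmt17 (lam β : ℝ) (hlam : 0 < lam) (hβ0 : 0 < β) (hβ1 : β ≤ 1) (n : ℕ) (x : ℝ) :
    appell lam β n x =
      ∑ k ∈ Finset.range (n + 1), (n.choose k : ℂ) *
        (∑ i ∈ Finset.range (n - k + 1), (-1 : ℂ) ^ i * (i.factorial : ℂ) *
          bellPoly (n - k) i (fun j => ((fpMoment lam β j : ℝ) : ℂ))) * (x : ℂ) ^ k :=
  stmt17_general hlam.le hβ0 hβ1 n x
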